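/- Let 𝒜 be the class of all arithmetical sets X ⊆ ℕ with Kᶜ ≰_e X, where K = {e : e ∈ W_e} is the halting set. Then 𝒜 is not a splitting class: there exist non-c.e. sets B₁, B₂ ∈ 𝒜 such that for every C ∈ 𝒜, at least one of B₁ ⊕ C and B₂ ⊕ C belongs to 𝒜; in particular the splitting condition fails for A = ∅ and 𝓑 = {B₁, B₂}. -/

import Mathlib

/-!
The two sets are the halves of a nontrivial Kalimullin pair: a pair `{A, B}` for which a c.e.
relation `w` contains `A × B` and is disjoint from `Aᶜ × Bᶜ`. Two properties carry the proof.

* If `Z ≤ₑ A ⊕ C` and `Z ≤ₑ B ⊕ C`, then `Z ≤ₑ C` (`KalimullinPair.enumRed_of_oplus`). With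
  `Z = Kᶜ` this shows that for `C` in the class at least one of `A ⊕ C`, `B ⊕ C` is in the class.
* If `B` is not c.e., then `Kᶜ ≰ₑ A` (`KalimullinPair.not_enumRed`), and symmetrically. Hence
  arithmetical non-c.e. sets forming a Kalimullin pair automatically belong to the class.

Such a pair is given by a lexicographic cut (`exists_kalimullinPair`). Let `S = K_X` for
`X = J_e(∅)`, let `B` be the set of canonical indices of finite sets lexicographically above `S`,
and `A = Bᶜ`. The lexicographic order of finite sets is computable and serves as `w`. Both halves
are enumerable from iterated jumps of `∅`. If one of them were c.e., both would be enumeration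
reducible to `J_e(∅)`; but `Sᶜ` can be enumerated from the two halves, while `Sᶜ ≰ₑ J_e(∅)` by
diagonalization.

Enumeration reducibility is handled through `EnumIn X p` (the predicate `p` is enumerable from
positive information about `X`), which is closed under conjunction, disjunction, existential
quantification and quantification over finite lists, so that reductions amount to writing down a
definition of the right form.
-/

def Dset (u : ℕ) : Set ℕ := {i | Nat.testBit u i}

def enumOp (W A : Set ℕ) : Set ℕ := {x | ∃ u, Nat.pair x u ∈ W ∧ Dset u ⊆ A}

def CE (W : Set ℕ) : Prop := ∃ f : ℕ →. ℕ, Partrec f ∧ W = f.Dom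

def EnumRed (A B : Set ℕ) : Prop := ∃ W, CE W ∧ A = enumOp W B

def EnumEq (A B : Set ℕ) : Prop := EnumRed A B ∧ EnumRed B A

def WeStd (e : ℕ) : Set ℕ := {x | ((Denumerable.ofNat Nat.Partrec.Code e).eval x).Dom}

def PhiStd (e : ℕ) : Set ℕ → Set ℕ := enumOp (WeStd e)

def pgraph (φ : ℕ →. ℕ) : Set ℕ := {n | n.unpair.2 ∈ φ n.unpair.1}

def peRed (φ ψ : ℕ →. ℕ) : Prop := EnumRed (pgraph φ) (pgraph ψ)

def pfAdd (φ ψ : ℕ →. ℕ) : ℕ →. ℕ := fun n => if n % 2 = 0 then φ (n / 2) else ψ (n / 2)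

def pfCons (i : ℕ) (φ : ℕ →. ℕ) : ℕ →. ℕ := fun n => if n = 0 then Part.some i else φ (n - 1)

abbrev MassPb := Set (ℕ →. ℕ)

def mpPlus (A B : MassPb) : MassPb := {h | ∃ φ ∈ A, ∃ ψ ∈ B, h = pfAdd φ ψ}

def mpCons (i : ℕ) (A : MassPb) : MassPb := pfCons i '' A

def mpWedge (A B : MassPb) : MassPb := mpCons 0 A ∪ mpCons 1 B

def mpArrow (A B : MassPb) : MassPb :=
  {h | ∃ e φ, h = pfCons e φ ∧ ∀ ψ ∈ A, ∃ χ ∈ B, pgraph χ = PhiStd e (pgraph (pfAdd φ ψ))}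

def DRed (A B : MassPb) : Prop :=
  ∃ W, CE W ∧ ∀ ψ ∈ B, ∃ χ ∈ A, pgraph χ = enumOp W (pgraph ψ)

def DEq (A B : MassPb) : Prop := DRed A B ∧ DRed B A

def DwRed (A B : MassPb) : Prop := ∀ ψ ∈ B, ∃ φ ∈ A, peRed φ ψ

def DwEq (A B : MassPb) : Prop := DwRed A B ∧ DwRed B A

def UpClosedE (A : MassPb) : Prop := ∀ φ ψ, φ ∈ A → peRed φ ψ → ψ ∈ A

def DMProblem (A : MassPb) : Prop := A.Nonempty ∧ UpClosedE A

def PartCompFn (φ : ℕ →. ℕ) : Prop := CE (pgraph φ)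

def oplus (A B : Set ℕ) : Set ℕ := (fun x => 2*x) '' A ∪ (fun x => 2*x+1) '' B

/-- A collection of subsets of `ℕ` is downwards `≤ₑ`-closed. -/
def DownClosedE (I : Set (Set ℕ)) : Prop := ∀ X Y : Set ℕ, EnumRed X Y → Y ∈ I → X ∈ I

/-- A splitting class of sets under enumeration reducibility. -/
def SplittingClassE (I : Set (Set ℕ)) : Prop :=
  I.Countable ∧ DownClosedE I ∧
  ∀ A ∈ I, ∀ Bs : Set (Set ℕ), Bs.Finite → Bs ⊆ I → (∀ B ∈ Bs, ¬ EnumRed B A) →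
    ∃ C ∈ I, EnumRed A C ∧ ¬ EnumRed C A ∧ ∀ B ∈ Bs, oplus B C ∉ I

/-- The halting set `K = {e : e ∈ W_e}`. -/
def Khalt : Set ℕ := {e | e ∈ WeStd e}

/-- `K_X = {e : e ∈ Φ_e(X)}`. -/
def Kset (X : Set ℕ) : Set ℕ := {e | e ∈ PhiStd e X}

/-- The enumeration jump `J_e(X) = K_X ⊕ (K_X)ᶜ`. -/
def Je (X : Set ℕ) : Set ℕ := oplus (Kset X) (Kset X)ᶜ

/-- `X` is arithmetical: `X ≤ₑ J_e^{(n)}(∅)` for some `n`. -/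
def Arithmetical (X : Set ℕ) : Prop := ∃ n : ℕ, EnumRed X (Je^[n] ∅)

/-- The class of arithmetical sets whose e-degree is not above the first
e-jump, i.e. with `Kᶜ ≰ₑ X`. -/
def ArithBelowJump : Set (Set ℕ) := {X | Arithmetical X ∧ ¬ EnumRed Khaltᶜ X}

/-! ### Enumerability relative to an oracle -/

/-- `EnumIn X p`: the predicate `p` is enumerable from positive information about `X`. A natural
number `n` with `R a n` is a certificate for `p a` that is valid as soon as the finitely many
queries listed in `F a n` belong to `X`. For `X = ∅` this is recursive enumerability. -/
def EnumIn {α : Type*} [Primcodable α] (X : Set ℕ) (p : α → Prop) : Prop :=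
  ∃ (R : α → ℕ → Prop) (F : α → ℕ → List ℕ), PrimrecRel R ∧ Primrec₂ F ∧
    ∀ a, p a ↔ ∃ n, R a n ∧ ∀ i ∈ F a n, i ∈ X

section EnumIn

variable {α β γ : Type*} [Primcodable α] [Primcodable β] [Primcodable γ] {X Y : Set ℕ}

theorem EnumIn.of_iff {p q : α → Prop} (h : EnumIn X p) (H : ∀ a, q a ↔ p a) : EnumIn X q := by
  obtain rfl : q = p := funext fun a => propext (H a)
  exact h

/-- Certificates may be taken from any `Primcodable` type. -/
theorem EnumIn.of_wit {p : α → Prop} (R : α → γ → Prop) (F : α → γ → List ℕ)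
    (hR : PrimrecRel R) (hF : Primrec₂ F)
    (h : ∀ a, p a ↔ ∃ g, R a g ∧ ∀ i ∈ F a g, i ∈ X) : EnumIn X p := by
  classical
  refine ⟨fun a n => ((Encodable.decode (α := γ) n).map fun g => decide (R a g)) = some true,
    fun a n => ((Encodable.decode (α := γ) n).map fun g => F a g).getD [], ?_, ?_, ?_⟩
  · refine Primrec.eq.comp ?_ (Primrec.const _)
    exact Primrec.option_map (Primrec.decode.comp Primrec.snd)
      (hR.decide.comp (Primrec.fst.comp Primrec.fst) Primrec.snd)
  · refine Primrec.option_getD.comp ?_ (Primrec.const _)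
    exact Primrec.option_map (Primrec.decode.comp Primrec.snd)
      (hF.comp (Primrec.fst.comp Primrec.fst) Primrec.snd)
  · intro a
    rw [h]
    constructor
    · rintro ⟨g, hg, hi⟩
      exact ⟨Encodable.encode g, by simpa using hg, by simpa using hi⟩
    · rintro ⟨n, hn, hi⟩
      simp only [Option.map_eq_some_iff, decide_eq_true_eq] at hn
      obtain ⟨g, hg, hgR⟩ := hn
      exact ⟨g, hgR, by simpa [hg] using hi⟩

theorem EnumIn.prim {p : α → Prop} (hp : PrimrecPred p) : EnumIn X p :=
  ⟨fun a _ => p a, fun _ _ => [], hp.comp Primrec.fst, Primrec.const _, by simp⟩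

theorem EnumIn.mem {f : α → ℕ} (hf : Primrec f) : EnumIn X fun a => f a ∈ X :=
  ⟨fun _ _ => True, fun a _ => [f a], ⟨fun _ => isTrue trivial, Primrec.const _⟩,
    Primrec.list_cons.comp (hf.comp Primrec.fst) (Primrec.const _), by simp⟩

theorem EnumIn.comp {p : β → Prop} (hp : EnumIn X p) {f : α → β} (hf : Primrec f) :
    EnumIn X fun a => p (f a) := by
  obtain ⟨R, F, hR, hF, h⟩ := hp
  exact ⟨fun a n => R (f a) n, fun a n => F (f a) n, hR.comp (hf.comp Primrec.fst) Primrec.snd,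
    hF.comp (hf.comp Primrec.fst) Primrec.snd, fun a => h _⟩

theorem EnumIn.and {p q : α → Prop} (hp : EnumIn X p) (hq : EnumIn X q) :
    EnumIn X fun a => p a ∧ q a := by
  obtain ⟨R, F, hR, hF, h⟩ := hp
  obtain ⟨R', F', hR', hF', h'⟩ := hq
  refine EnumIn.of_wit (γ := ℕ × ℕ) (fun a g => R a g.1 ∧ R' a g.2)
    (fun a g => F a g.1 ++ F' a g.2) ?_ ?_ ?_
  · exact (hR.comp Primrec.fst (Primrec.fst.comp Primrec.snd)).and
      (hR'.comp Primrec.fst (Primrec.snd.comp Primrec.snd))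
  · exact Primrec.list_append.comp (hF.comp Primrec.fst (Primrec.fst.comp Primrec.snd))
      (hF'.comp Primrec.fst (Primrec.snd.comp Primrec.snd))
  · intro a
    rw [h, h']
    constructor
    · rintro ⟨⟨m, hm, hm'⟩, n, hn, hn'⟩
      refine ⟨(m, n), ⟨hm, hn⟩, fun i hi => ?_⟩
      rcases List.mem_append.1 hi with hi | hi
      exacts [hm' i hi, hn' i hi]
    · rintro ⟨⟨m, n⟩, ⟨hm, hn⟩, hi⟩
      exact ⟨⟨m, hm, fun i h => hi i (List.mem_append_left _ h)⟩,
        n, hn, fun i h => hi i (List.mem_append_right _ h)⟩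

theorem EnumIn.or {p q : α → Prop} (hp : EnumIn X p) (hq : EnumIn X q) :
    EnumIn X fun a => p a ∨ q a := by
  obtain ⟨R, F, hR, hF, h⟩ := hp
  obtain ⟨R', F', hR', hF', h'⟩ := hq
  refine EnumIn.of_wit (γ := Bool × ℕ)
    (fun a g => (g.1 = true ∧ R a g.2) ∨ (g.1 = false ∧ R' a g.2))
    (fun a g => bif g.1 then F a g.2 else F' a g.2) ?_ ?_ ?_
  · have hb : Primrec fun z : α × Bool × ℕ => z.2.1 := Primrec.fst.comp Primrec.snd
    exact ((Primrec.eq.comp hb (Primrec.const true)).and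
      (hR.comp Primrec.fst (Primrec.snd.comp Primrec.snd))).or
      ((Primrec.eq.comp hb (Primrec.const false)).and
      (hR'.comp Primrec.fst (Primrec.snd.comp Primrec.snd)))
  · exact Primrec.cond (Primrec.fst.comp Primrec.snd)
      (hF.comp Primrec.fst (Primrec.snd.comp Primrec.snd))
      (hF'.comp Primrec.fst (Primrec.snd.comp Primrec.snd))
  · intro a
    rw [h, h']
    constructor
    · rintro (⟨n, hn⟩ | ⟨n, hn⟩)
      exacts [⟨(true, n), by simpa using hn⟩, ⟨(false, n), by simpa using hn⟩]
    · rintro ⟨⟨b, n⟩, hn⟩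
      cases b
      · exact Or.inr ⟨n, by simpa using hn⟩
      · exact Or.inl ⟨n, by simpa using hn⟩

theorem EnumIn.ex {p : α × β → Prop} (hp : EnumIn X p) : EnumIn X fun a => ∃ b, p (a, b) := by
  obtain ⟨R, F, hR, hF, h⟩ := hp
  refine EnumIn.of_wit (γ := β × ℕ) (fun a g => R (a, g.1) g.2) (fun a g => F (a, g.1) g.2) ?_ ?_ ?_
  · exact hR.comp (Primrec.fst.pair (Primrec.fst.comp Primrec.snd))
      (Primrec.snd.comp Primrec.snd)
  · exact hF.comp (Primrec.fst.pair (Primrec.fst.comp Primrec.snd))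
      (Primrec.snd.comp Primrec.snd)
  · intro a
    constructor
    · rintro ⟨b, hb⟩
      obtain ⟨n, hn⟩ := (h (a, b)).1 hb
      exact ⟨(b, n), hn⟩
    · rintro ⟨⟨b, n⟩, hn⟩
      exact ⟨b, (h (a, b)).2 ⟨n, hn⟩⟩

/-- Closure under universal quantification over a finite list: a certificate is a list of pairs
`(b, n)`, with `n` certifying the instance at `b`, that covers all entries `b` of the list. -/
theorem EnumIn.ball {p : α → β → Prop} (hp : EnumIn X fun z : α × β => p z.1 z.2)
    {L : α → List β} (hL : Primrec L) : EnumIn X fun a => ∀ b ∈ L a, p a b := by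
  obtain ⟨R, F, hR, hF, h⟩ := hp
  refine EnumIn.of_wit (γ := List (β × ℕ))
    (fun a g => (∀ b ∈ L a, ∃ w ∈ g, w.1 = b) ∧ ∀ w ∈ g, R (a, w.1) w.2)
    (fun a g => g.flatMap fun w => F (a, w.1) w.2) ?_ ?_ ?_
  · refine PrimrecPred.and ?_ ?_
    · have h1 : PrimrecRel fun (w : β × ℕ) (b : β) => w.1 = b :=
        Primrec.eq.comp (Primrec.fst.comp Primrec.fst) Primrec.snd
      have h2 : PrimrecRel fun (b : β) (g : List (β × ℕ)) => ∃ w ∈ g, w.1 = b :=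
        h1.exists_mem_list.swap
      exact h2.forall_mem_list.comp (hL.comp Primrec.fst) Primrec.snd
    · have h1 : PrimrecRel fun (w : β × ℕ) (a : α) => R (a, w.1) w.2 :=
        hR.comp (Primrec.snd.pair (Primrec.fst.comp Primrec.fst)) (Primrec.snd.comp Primrec.fst)
      exact h1.forall_mem_list.comp Primrec.snd Primrec.fst
  · exact Primrec.list_flatMap Primrec.snd
      (hF.comp ((Primrec.fst.comp Primrec.fst).pair (Primrec.fst.comp Primrec.snd))
        (Primrec.snd.comp Primrec.snd))
  · intro a
    constructor
    · intro H
      have : ∀ b ∈ L a, ∃ n, R (a, b) n ∧ ∀ i ∈ F (a, b) n, i ∈ X := fun b hb => (h (a, b)).1 (H b hb)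
      choose! f hf using this
      refine ⟨(L a).map fun b => (b, f b), ⟨?_, ?_⟩, ?_⟩
      · intro b hb
        exact ⟨(b, f b), List.mem_map.2 ⟨b, hb, rfl⟩, rfl⟩
      · intro w hw
        obtain ⟨b, hb, rfl⟩ := List.mem_map.1 hw
        exact (hf b hb).1
      · intro i hi
        obtain ⟨w, hw, hi⟩ := List.mem_flatMap.1 hi
        obtain ⟨b, hb, rfl⟩ := List.mem_map.1 hw
        exact (hf b hb).2 i hi
    · rintro ⟨g, ⟨hg, hR⟩, hi⟩ b hb
      obtain ⟨⟨b', n⟩, hw, rfl⟩ := hg b hb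
      exact (h (a, b')).2 ⟨n, hR _ hw, fun i h => hi i (List.mem_flatMap.2 ⟨_, hw, h⟩)⟩

theorem EnumIn.trans {p : α → Prop} (hp : EnumIn X p) (hX : EnumIn Y fun x => x ∈ X) :
    EnumIn Y p := by
  obtain ⟨R, F, hR, hF, h⟩ := hp
  refine EnumIn.of_iff (EnumIn.ex (p := fun z => R z.1 z.2 ∧ ∀ i ∈ F z.1 z.2, i ∈ X) ?_) h
  exact (EnumIn.prim hR).and (EnumIn.ball (p := fun _ i => i ∈ X) (hX.comp Primrec.snd) hF)

theorem EnumIn.of_empty {p : α → Prop} (hp : EnumIn ∅ p) : EnumIn X p :=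
  hp.trans <| (EnumIn.prim (p := fun _ : ℕ => False)
    ⟨fun _ => isFalse id, Primrec.const false⟩).of_iff fun _ => Iff.rfl

end EnumIn

/-! ### Translation to c.e. sets and enumeration operators -/

theorem primrec_testBit : Primrec₂ Nat.testBit := by
  have hpow : Primrec fun n : ℕ => 2 ^ n :=
    (Primrec.nat_rec₁ (f := fun _ m => 2 * m) 1 (Primrec.nat_double.comp Primrec.snd)).of_eq
      fun n => by
        induction n with
        | zero => rfl
        | succ n ih => rw [pow_succ, mul_comm, ← ih]
  have h : PrimrecRel fun m n : ℕ => m / 2 ^ n % 2 = 1 :=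
    Primrec.eq.comp (Primrec.nat_mod.comp (Primrec.nat_div.comp Primrec.fst
      (hpow.comp Primrec.snd)) (Primrec.const 2)) (Primrec.const 1)
  exact h.decide.of_eq fun m n => (Nat.testBit_eq_decide_div_mod_eq).symm

theorem exists_testBit_iff (l : List ℕ) : ∃ u : ℕ, ∀ i, u.testBit i = true ↔ i ∈ l := by
  induction l with
  | nil => exact ⟨0, by simp⟩
  | cons a l ih =>
    obtain ⟨u, hu⟩ := ih
    refine ⟨2 ^ a ||| u, fun i => ?_⟩
    rw [Nat.testBit_or, Bool.or_eq_true, hu, Nat.testBit_two_pow, List.mem_cons, decide_eq_true_eq,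
      eq_comm]

theorem lt_of_testBit {u i : ℕ} (h : u.testBit i = true) : i < u :=
  Nat.lt_of_lt_of_le Nat.lt_two_pow_self (Nat.ge_two_pow_of_testBit h)

theorem enumIn_eval : EnumIn ∅ fun z : ℕ × ℕ => z.2 ∈ WeStd z.1 := by
  have h : PrimrecPred fun w : (ℕ × ℕ) × ℕ =>
      ((Denumerable.ofNat Nat.Partrec.Code w.1.1).evaln w.2 w.1.2).isSome = true :=
    Primrec.eq.comp (Primrec.option_isSome.comp (Nat.Partrec.Code.primrec_evaln.comp
      ((Primrec.snd.pair ((Primrec.ofNat _).comp (Primrec.fst.comp Primrec.fst))).pair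
        (Primrec.snd.comp Primrec.fst)))) (Primrec.const true)
  refine EnumIn.of_iff (EnumIn.ex (EnumIn.prim h)) fun z => ?_
  simp only [WeStd, Set.mem_ofPred_eq, Part.dom_iff_mem, Option.isSome_iff_exists]
  constructor
  · rintro ⟨y, hy⟩
    obtain ⟨k, hk⟩ := Nat.Partrec.Code.evaln_complete.1 hy
    exact ⟨k, y, hk⟩
  · rintro ⟨k, y, hk⟩
    exact ⟨y, Nat.Partrec.Code.evaln_complete.2 ⟨k, hk⟩⟩

theorem CE.exists_index {W : Set ℕ} (h : CE W) : ∃ e, WeStd e = W := by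
  obtain ⟨f, hf, rfl⟩ := h
  obtain ⟨c, hc⟩ := Nat.Partrec.Code.exists_code.1 (Partrec.nat_iff.1 hf)
  refine ⟨Encodable.encode c, ?_⟩
  ext x
  simp [WeStd, hc, PFun.Dom]

theorem ce_iff_enumIn {W : Set ℕ} : CE W ↔ EnumIn ∅ fun x => x ∈ W := by
  constructor
  · intro h
    obtain ⟨e, rfl⟩ := h.exists_index
    exact enumIn_eval.comp ((Primrec.const e).pair Primrec.id)
  · rintro ⟨R, F, hR, hF, h⟩
    classical
    have hP : PrimrecRel fun a n => R a n ∧ F a n = [] :=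
      PrimrecPred.and hR (Primrec.eq.comp hF (Primrec.const []))
    refine ⟨fun a => Nat.rfind fun n => Part.some (decide (R a n ∧ F a n = [])),
      Partrec.rfind hP.decide.to_comp.partrec, ?_⟩
    ext a
    refine (h a).trans ?_
    refine Iff.trans ?_ (Nat.rfind_dom (p := fun n => Part.some (decide (R a n ∧ F a n = [])))).symm
    simp [List.eq_nil_iff_forall_not_mem]

theorem enumRed_iff_enumIn {A B : Set ℕ} : EnumRed A B ↔ EnumIn B fun x => x ∈ A := by
  constructor
  · rintro ⟨W, hW, rfl⟩
    have hW' := (ce_iff_enumIn.1 hW).of_empty (X := B)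
    have h1 : EnumIn B fun z : ℕ × ℕ => Nat.pair z.1 z.2 ∈ W := hW'.comp Primrec₂.natPair
    have h2 : EnumIn B fun w : (ℕ × ℕ) × ℕ => Nat.testBit w.1.2 w.2 = false ∨ w.2 ∈ B :=
      (EnumIn.prim (Primrec.eq.comp (primrec_testBit.comp (Primrec.snd.comp Primrec.fst)
        Primrec.snd) (Primrec.const false))).or (EnumIn.mem Primrec.snd)
    have h3 := EnumIn.ball (p := fun (z : ℕ × ℕ) i => Nat.testBit z.2 i = false ∨ i ∈ B) h2
      (Primrec.list_range.comp Primrec.snd)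
    refine EnumIn.of_iff (EnumIn.ex (h1.and h3)) fun x => ?_
    refine exists_congr fun u => and_congr_right fun _ => ?_
    constructor
    · intro hu i _
      cases hb : u.testBit i
      · exact Or.inl rfl
      · exact Or.inr (hu hb)
    · intro H i hi
      have hi' : u.testBit i = true := hi
      rcases H i (List.mem_range.2 (lt_of_testBit hi)) with h | h
      · simp [hi'] at h
      · exact h
  · rintro ⟨R, F, hR, hF, h⟩
    -- The pair `⟨x, u⟩` is enumerated once `D_u` contains the queries of some certificate for `x`.
    refine ⟨{z | ∃ n, R z.unpair.1 n ∧ ∀ i ∈ F z.unpair.1 n, z.unpair.2.testBit i = true},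
      ce_iff_enumIn.2 ?_, ?_⟩
    · have hx : Primrec fun w : ℕ × ℕ => w.1.unpair.1 :=
        Primrec.fst.comp (Primrec.unpair.comp Primrec.fst)
      have h1 : PrimrecPred fun w : ℕ × ℕ => R w.1.unpair.1 w.2 := hR.comp hx Primrec.snd
      have h2 : PrimrecPred fun v : (ℕ × ℕ) × ℕ => v.1.1.unpair.2.testBit v.2 = true :=
        Primrec.eq.comp (primrec_testBit.comp (Primrec.snd.comp (Primrec.unpair.comp
          (Primrec.fst.comp Primrec.fst))) Primrec.snd) (Primrec.const true)
      exact EnumIn.ex ((EnumIn.prim h1).and (EnumIn.ball (p := fun (w : ℕ × ℕ) i =>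
        w.1.unpair.2.testBit i = true) (EnumIn.prim h2) (hF.comp hx Primrec.snd)))
    · ext x
      refine (h x).trans ?_
      simp only [enumOp, Set.mem_ofPred_eq, Nat.unpair_pair]
      constructor
      · rintro ⟨n, hn, hi⟩
        obtain ⟨u, hu⟩ := exists_testBit_iff (F x n)
        exact ⟨u, ⟨n, hn, fun i h => (hu i).2 h⟩, fun i h => hi i ((hu i).1 h)⟩
      · rintro ⟨u, ⟨n, hn, hi⟩, hu⟩
        exact ⟨n, hn, fun i h => hu (hi i h)⟩

theorem EnumRed.trans {A B C : Set ℕ} (h : EnumRed A B) (h' : EnumRed B C) : EnumRed A C :=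
  enumRed_iff_enumIn.2 ((enumRed_iff_enumIn.1 h).trans (enumRed_iff_enumIn.1 h'))

theorem CE.enumRed {A : Set ℕ} (h : CE A) (B : Set ℕ) : EnumRed A B :=
  enumRed_iff_enumIn.2 (ce_iff_enumIn.1 h).of_empty

theorem enumRed_empty_iff {A : Set ℕ} : EnumRed A ∅ ↔ CE A :=
  enumRed_iff_enumIn.trans ce_iff_enumIn.symm

/-! ### Joins and the enumeration jump -/

theorem mem_oplus {A B : Set ℕ} {x : ℕ} :
    x ∈ oplus A B ↔ (x % 2 = 0 ∧ x / 2 ∈ A) ∨ (x % 2 = 1 ∧ x / 2 ∈ B) := by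
  simp only [oplus, Set.mem_union, Set.mem_image]
  constructor
  · rintro (⟨y, hy, rfl⟩ | ⟨y, hy, rfl⟩)
    · exact Or.inl ⟨by omega, by rwa [show 2 * y / 2 = y by omega]⟩
    · exact Or.inr ⟨by omega, by rwa [show (2 * y + 1) / 2 = y by omega]⟩
  · rintro (⟨h, hx⟩ | ⟨h, hx⟩)
    · exact Or.inl ⟨_, hx, by omega⟩
    · exact Or.inr ⟨_, hx, by omega⟩

theorem primrec_half : Primrec fun x : ℕ => x / 2 :=
  Primrec.nat_div.comp Primrec.id (Primrec.const 2)

theorem primrecPred_mod_two (k : ℕ) : PrimrecPred fun x : ℕ => x % 2 = k :=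
  Primrec.eq.comp (Primrec.nat_mod.comp Primrec.id (Primrec.const 2)) (Primrec.const k)

theorem EnumRed.oplus {A B C : Set ℕ} (hA : EnumRed A C) (hB : EnumRed B C) :
    EnumRed (oplus A B) C :=
  enumRed_iff_enumIn.2 <| EnumIn.of_iff
    (((EnumIn.prim (primrecPred_mod_two 0)).and ((enumRed_iff_enumIn.1 hA).comp primrec_half)).or
    ((EnumIn.prim (primrecPred_mod_two 1)).and ((enumRed_iff_enumIn.1 hB).comp primrec_half)))
    fun _ => mem_oplus

theorem two_mul_mem_Je {X : Set ℕ} {x : ℕ} : 2 * x ∈ Je X ↔ x ∈ Kset X := by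
  simp [Je, mem_oplus]

theorem two_mul_add_one_mem_Je {X : Set ℕ} {x : ℕ} : 2 * x + 1 ∈ Je X ↔ x ∉ Kset X := by
  rw [Je, mem_oplus, show (2 * x + 1) / 2 = x by omega]
  simp

/-- `K_X` is complete, via an s-m-n argument: row `x` of the operator is moved to every row of
the operator with index `s x`. -/
theorem EnumIn.exists_Kset {X : Set ℕ} {p : ℕ → Prop} (hp : EnumIn X p) :
    ∃ s : ℕ → ℕ, Primrec s ∧ ∀ x, p x ↔ s x ∈ Kset X := by
  obtain ⟨W, hW, hpW⟩ := (enumRed_iff_enumIn (A := {x | p x})).2 hp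
  have hV : CE {z | Nat.pair z.unpair.1 z.unpair.2.unpair.2 ∈ W} :=
    ce_iff_enumIn.2 <| (ce_iff_enumIn.1 hW).comp <|
      Primrec₂.natPair.comp (Primrec.fst.comp Primrec.unpair)
        (Primrec.snd.comp (Primrec.unpair.comp (Primrec.snd.comp Primrec.unpair)))
  obtain ⟨e, he⟩ := hV.exists_index
  refine ⟨fun x => Encodable.encode
    (Nat.Partrec.Code.curry (Denumerable.ofNat Nat.Partrec.Code e) x),
    Primrec.encode.comp (Nat.Partrec.Code.primrec₂_curry.comp (Primrec.const _) Primrec.id), ?_⟩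
  intro x
  have key : ∀ y u, Nat.pair y u ∈ WeStd (Encodable.encode
      (Nat.Partrec.Code.curry (Denumerable.ofNat Nat.Partrec.Code e) x)) ↔ Nat.pair x u ∈ W := by
    intro y u
    have : Nat.pair x (Nat.pair y u) ∈ WeStd e ↔ Nat.pair x u ∈ W := by
      rw [he]; simp
    rw [← this]
    simp [WeStd, Nat.Partrec.Code.eval_curry]
  have hx : p x ↔ x ∈ enumOp W X := by rw [← hpW]; rfl
  rw [hx]
  simp only [Kset, PhiStd, enumOp, Set.mem_ofPred_eq, key]

theorem EnumIn.jump {X : Set ℕ} {p : ℕ → Prop} (hp : EnumIn X p) : EnumIn (Je X) p := by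
  obtain ⟨s, hs, h⟩ := hp.exists_Kset
  exact EnumIn.of_iff (EnumIn.mem (Primrec.nat_double.comp hs)) fun x =>
    (h x).trans two_mul_mem_Je.symm

theorem EnumIn.jump_not {X : Set ℕ} {p : ℕ → Prop} (hp : EnumIn X p) :
    EnumIn (Je X) fun x => ¬ p x := by
  obtain ⟨s, hs, h⟩ := hp.exists_Kset
  exact EnumIn.of_iff (EnumIn.mem (Primrec.nat_double_succ.comp hs)) fun x =>
    (not_congr (h x)).trans two_mul_add_one_mem_Je.symm

theorem not_enumRed_compl_Kset (X : Set ℕ) : ¬ EnumRed (Kset X)ᶜ X := by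
  rintro ⟨W, hW, h⟩
  obtain ⟨e, rfl⟩ := hW.exists_index
  have : e ∈ (Kset X)ᶜ ↔ e ∈ Kset X := by rw [h]; rfl
  exact iff_not_self this.symm

theorem not_ce_compl_Khalt : ¬ CE Khaltᶜ := by
  intro h
  obtain ⟨e, he⟩ := h.exists_index
  have : e ∈ Khaltᶜ ↔ e ∈ Khalt := by rw [← he]; rfl
  exact iff_not_self this.symm

theorem Arithmetical.oplus {A B : Set ℕ} (hA : Arithmetical A) (hB : Arithmetical B) :
    Arithmetical (oplus A B) := by
  have mono : ∀ (Z : Set ℕ) (n k : ℕ), EnumRed Z (Je^[n] ∅) → EnumRed Z (Je^[n + k] ∅) := by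
    intro Z n k h
    induction k with
    | zero => exact h
    | succ k ih =>
      rw [← add_assoc, Function.iterate_succ_apply']
      exact enumRed_iff_enumIn.2 (enumRed_iff_enumIn.1 ih).jump
  obtain ⟨m, hm⟩ := hA
  obtain ⟨n, hn⟩ := hB
  refine ⟨m + n, (mono A m n hm).oplus ?_⟩
  rw [add_comm]
  exact mono B n m hn

/-! ### Kalimullin pairs -/

/-- `{A, B}` is a Kalimullin pair: some c.e. relation contains `A × B` and is disjoint from
`Aᶜ × Bᶜ`. -/
def KalimullinPair (A B : Set ℕ) : Prop :=
  ∃ w : ℕ → ℕ → Prop, (EnumIn ∅ fun z : ℕ × ℕ => w z.1 z.2) ∧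
    (∀ a ∈ A, ∀ b ∈ B, w a b) ∧ ∀ a ∉ A, ∀ b ∉ B, ¬ w a b

theorem KalimullinPair.symm {A B : Set ℕ} (h : KalimullinPair A B) : KalimullinPair B A := by
  obtain ⟨w, hw, h1, h2⟩ := h
  exact ⟨fun a b => w b a, hw.comp (Primrec.snd.pair Primrec.fst),
    fun a ha b hb => h1 b hb a ha, fun a ha b hb => h2 b hb a ha⟩

/-- The meet property: whatever lies below both `A ⊕ C` and `B ⊕ C` lies below `C`. A pair of
computations, one from `A ⊕ C` and one from `B ⊕ C`, is accepted when its queries to `C` are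
correct and all pairs of queries to `A` and to `B` satisfy `w`; then all its queries to `A` or all
its queries to `B` must be correct. -/
theorem KalimullinPair.enumRed_of_oplus {A B C Z : Set ℕ} (h : KalimullinPair A B)
    (hA : EnumRed Z (oplus A C)) (hB : EnumRed Z (oplus B C)) : EnumRed Z C := by
  obtain ⟨w, hw, h1, h2⟩ := h
  obtain ⟨R, F, hR, hF, hZ⟩ := enumRed_iff_enumIn.1 hA
  obtain ⟨R', F', hR', hF', hZ'⟩ := enumRed_iff_enumIn.1 hB
  rw [enumRed_iff_enumIn]
  have hwC := hw.of_empty (X := C)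
  have pR : EnumIn C fun v : (ℕ × ℕ) × ℕ => R v.1.1 v.1.2 :=
    EnumIn.prim (hR.comp (Primrec.fst.comp Primrec.fst) (Primrec.snd.comp Primrec.fst))
  have pR' : EnumIn C fun v : (ℕ × ℕ) × ℕ => R' v.1.1 v.2 :=
    EnumIn.prim (hR'.comp (Primrec.fst.comp Primrec.fst) Primrec.snd)
  have pF : Primrec fun v : (ℕ × ℕ) × ℕ => F v.1.1 v.1.2 :=
    hF.comp (Primrec.fst.comp Primrec.fst) (Primrec.snd.comp Primrec.fst)
  have pF' : Primrec fun v : (ℕ × ℕ) × ℕ => F' v.1.1 v.2 :=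
    hF'.comp (Primrec.fst.comp Primrec.fst) Primrec.snd
  have pC : EnumIn C fun i : ℕ => i % 2 = 0 ∨ i / 2 ∈ C :=
    (EnumIn.prim (primrecPred_mod_two 0)).or (EnumIn.mem primrec_half)
  have pw : EnumIn C fun z : ℕ × ℕ => z.1 % 2 = 1 ∨ z.2 % 2 = 1 ∨ w (z.1 / 2) (z.2 / 2) :=
    (EnumIn.prim ((primrecPred_mod_two 1).comp Primrec.fst)).or
      ((EnumIn.prim ((primrecPred_mod_two 1).comp Primrec.snd)).or
        (hwC.comp ((primrec_half.comp Primrec.fst).pair (primrec_half.comp Primrec.snd))))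
  have q1 := EnumIn.ball (p := fun (_ : (ℕ × ℕ) × ℕ) i => i % 2 = 0 ∨ i / 2 ∈ C)
    (pC.comp Primrec.snd) pF
  have q2 := EnumIn.ball (p := fun (_ : (ℕ × ℕ) × ℕ) i => i % 2 = 0 ∨ i / 2 ∈ C)
    (pC.comp Primrec.snd) pF'
  have q3 := EnumIn.ball
    (p := fun (v : (ℕ × ℕ) × ℕ) i => ∀ j ∈ F' v.1.1 v.2, i % 2 = 1 ∨ j % 2 = 1 ∨ w (i / 2) (j / 2))
    (EnumIn.ball
      (p := fun (t : ((ℕ × ℕ) × ℕ) × ℕ) j => t.2 % 2 = 1 ∨ j % 2 = 1 ∨ w (t.2 / 2) (j / 2))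
      (pw.comp ((Primrec.snd.comp Primrec.fst).pair Primrec.snd)) (pF'.comp Primrec.fst)) pF
  refine EnumIn.of_iff (EnumIn.ex (EnumIn.ex (pR.and (pR'.and (q1.and (q2.and q3)))))) fun x => ?_
  constructor
  · intro hx
    obtain ⟨m, hm, hi⟩ := (hZ x).1 hx
    obtain ⟨n, hn, hj⟩ := (hZ' x).1 hx
    refine ⟨m, n, hm, hn, fun i h => ?_, fun j h => ?_, fun i h j h' => ?_⟩
    · rcases mem_oplus.1 (hi i h) with h | h
      exacts [Or.inl h.1, Or.inr h.2]
    · rcases mem_oplus.1 (hj j h) with h | h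
      exacts [Or.inl h.1, Or.inr h.2]
    · rcases mem_oplus.1 (hi i h) with h | h
      · rcases mem_oplus.1 (hj j h') with h' | h'
        · exact Or.inr (Or.inr (h1 _ h.2 _ h'.2))
        · exact Or.inr (Or.inl h'.1)
      · exact Or.inl h.1
  · rintro ⟨m, n, hm, hn, hi, hj, hij⟩
    by_contra hx
    have e1 : ∃ i ∈ F x m, i % 2 = 0 ∧ i / 2 ∉ A := by
      by_contra! H
      refine hx ((hZ x).2 ⟨m, hm, fun i h => mem_oplus.2 ?_⟩)
      rcases Nat.mod_two_eq_zero_or_one i with h0 | h0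
      · exact Or.inl ⟨h0, H i h h0⟩
      · exact Or.inr ⟨h0, (hi i h).resolve_left (by simp [h0])⟩
    have e2 : ∃ j ∈ F' x n, j % 2 = 0 ∧ j / 2 ∉ B := by
      by_contra! H
      refine hx ((hZ' x).2 ⟨n, hn, fun i h => mem_oplus.2 ?_⟩)
      rcases Nat.mod_two_eq_zero_or_one i with h0 | h0
      · exact Or.inl ⟨h0, H i h h0⟩
      · exact Or.inr ⟨h0, (hj i h).resolve_left (by simp [h0])⟩
    obtain ⟨i, hiF, hi0, hiA⟩ := e1
    obtain ⟨j, hjF, hj0, hjB⟩ := e2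
    rcases hij i hiF j hjF with h | h | h
    · omega
    · omega
    · exact h2 _ hiA _ hjB h

/-- Given a reduction of `Kᶜ` to `A`, the set `B` consists of those `b` for which some `x ∈ K` has a
certificate, in the sense of `EnumIn`, all of whose queries are `w`-related to `b`: were there none
for some `b ∈ B`, the `x` having such a certificate would be exactly the elements of `Kᶜ`, which is
not c.e. -/
theorem KalimullinPair.not_enumRed {A B : Set ℕ} (h : KalimullinPair A B) (hB : ¬ CE B) :
    ¬ EnumRed Khaltᶜ A := by
  obtain ⟨w, hw, h1, h2⟩ := h
  intro hA
  obtain ⟨R, F, hR, hF, hZ⟩ := enumRed_iff_enumIn.1 hA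
  have hK : EnumIn ∅ fun x => x ∈ Khalt := enumIn_eval.comp (Primrec.id.pair Primrec.id)
  have hV : EnumIn ∅ fun z : ℕ × ℕ => ∃ n, R z.2 n ∧ ∀ a ∈ F z.2 n, w a z.1 := by
    refine EnumIn.ex ((EnumIn.prim (hR.comp (Primrec.snd.comp Primrec.fst) Primrec.snd)).and
      (EnumIn.ball (p := fun (v : (ℕ × ℕ) × ℕ) a => w a v.1.1) ?_
        (hF.comp (Primrec.snd.comp Primrec.fst) Primrec.snd)))
    exact hw.comp (Primrec.snd.pair (Primrec.fst.comp (Primrec.fst.comp Primrec.fst)))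
  apply hB
  rw [ce_iff_enumIn]
  refine EnumIn.of_iff (EnumIn.ex ((hK.comp Primrec.snd).and hV)) fun b => ?_
  constructor
  · intro hb
    by_contra! H
    apply not_ce_compl_Khalt
    rw [ce_iff_enumIn]
    refine EnumIn.of_iff (hV.comp ((Primrec.const b).pair Primrec.id)) fun x => ?_
    constructor
    · intro hx
      obtain ⟨n, hn, hi⟩ := (hZ x).1 hx
      exact ⟨n, hn, fun a ha => h1 a (hi a ha) b hb⟩
    · rintro ⟨n, hn, hi⟩ hx
      obtain ⟨a, ha, hwa⟩ := H x hx n hn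
      exact hwa (hi a ha)
  · rintro ⟨x, hx, n, hn, hi⟩
    by_contra hb
    exact (hZ x).2 ⟨n, hn, fun a ha => by_contra fun haA => h2 a haA b hb (hi a ha)⟩ hx

/-! ### Lexicographic cuts -/

/-- The strict lexicographic order on characteristic functions, position `0` being the most
significant. -/
def LexLt (A B : Set ℕ) : Prop := ∃ i, i ∉ A ∧ i ∈ B ∧ ∀ j < i, j ∈ A ↔ j ∈ B

theorem LexLt.irrefl (A : Set ℕ) : ¬ LexLt A A := fun ⟨_, h, h', _⟩ => h h'

theorem LexLt.trans {A B C : Set ℕ} (h : LexLt A B) (h' : LexLt B C) : LexLt A C := by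
  obtain ⟨i, hi, hi', hij⟩ := h
  obtain ⟨k, hk, hk', hkj⟩ := h'
  rcases lt_trichotomy i k with h | rfl | h
  · exact ⟨i, hi, (hkj i h).1 hi', fun j hj => (hij j hj).trans (hkj j (hj.trans h))⟩
  · exact absurd hi' hk
  · exact ⟨k, fun hA => hk ((hij k h).1 hA), hk', fun j hj => (hij j (hj.trans h)).trans (hkj j hj)⟩

theorem LexLt.trichotomy (A B : Set ℕ) : LexLt A B ∨ A = B ∨ LexLt B A := by
  classical
  by_cases hAB : A = B
  · exact Or.inr (Or.inl hAB)
  have hex : ∃ i, ¬ (i ∈ A ↔ i ∈ B) := by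
    by_contra! H
    exact hAB (Set.ext H)
  have hs := Nat.find_spec hex
  have hm : ∀ j < Nat.find hex, j ∈ A ↔ j ∈ B := fun j hj => not_not.1 (Nat.find_min hex hj)
  by_cases hA : Nat.find hex ∈ A
  · exact Or.inr (Or.inr ⟨_, fun hB => hs (iff_of_true hA hB), hA, fun j hj => (hm j hj).symm⟩)
  · exact Or.inl ⟨_, hA, by_contra fun hB => hs (iff_of_false hA hB), hm⟩

/-- The canonical indices of the finite sets lexicographically above `S`. -/
def upperCut (S : Set ℕ) : Set ℕ := {u | LexLt S (Dset u)}

/-- A lexicographic cut and its complement form a Kalimullin pair, witnessed by the order itself. -/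
theorem kalimullinPair_cut (S : Set ℕ) : KalimullinPair (upperCut S)ᶜ (upperCut S) := by
  refine ⟨fun a b => LexLt (Dset a) (Dset b), ?_, ?_, ?_⟩
  · have hbit : ∀ (c : Bool) {f g : (ℕ × ℕ) × ℕ → ℕ}, Primrec f → Primrec g →
        PrimrecPred fun v => (f v).testBit (g v) = c := fun c _ _ hf hg =>
      Primrec.eq.comp (primrec_testBit.comp hf hg) (Primrec.const c)
    have ha : Primrec fun v : (ℕ × ℕ) × ℕ => v.1.1 := Primrec.fst.comp Primrec.fst
    have hb : Primrec fun v : (ℕ × ℕ) × ℕ => v.1.2 := Primrec.snd.comp Primrec.fst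
    have heq : PrimrecPred fun v : (ℕ × ℕ) × ℕ => v.1.1.testBit v.2 = v.1.2.testBit v.2 :=
      Primrec.eq.comp (primrec_testBit.comp ha Primrec.snd) (primrec_testBit.comp hb Primrec.snd)
    have hall := EnumIn.ball (X := ∅)
      (p := fun (v : (ℕ × ℕ) × ℕ) j => v.1.1.testBit j = v.1.2.testBit j)
      (EnumIn.prim (heq.comp ((Primrec.fst.comp Primrec.fst).pair Primrec.snd)))
      (Primrec.list_range.comp Primrec.snd)
    refine EnumIn.of_iff (EnumIn.ex ((EnumIn.prim (hbit false ha Primrec.snd)).and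
      ((EnumIn.prim (hbit true hb Primrec.snd)).and hall))) fun z => ?_
    simp only [LexLt, Dset, Set.mem_ofPred_eq, List.mem_range, Bool.not_eq_true, ← Bool.eq_iff_iff]
  · intro a ha b hb
    rcases LexLt.trichotomy S (Dset a) with h | h | h
    · exact absurd h ha
    · rw [← h]; exact hb
    · exact h.trans hb
  · intro a ha b hb hab
    exact hb ((not_not.1 ha : LexLt S (Dset a)).trans hab)

theorem enumIn_upperCut {S Y : Set ℕ} (hS : EnumIn Y fun x => x ∈ S)
    (hS' : EnumIn Y fun x => x ∉ S) : EnumIn Y fun u => u ∈ upperCut S := by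
  have hbit : ∀ (c : Bool), PrimrecPred fun v : ℕ × ℕ => v.1.testBit v.2 = c := fun c =>
    Primrec.eq.comp primrec_testBit (Primrec.const c)
  have h1 : EnumIn Y fun v : ℕ × ℕ =>
      (v.2 ∈ S ∧ v.1.testBit v.2 = true) ∨ (v.2 ∉ S ∧ v.1.testBit v.2 = false) :=
    ((hS.comp Primrec.snd).and (EnumIn.prim (hbit true))).or
      ((hS'.comp Primrec.snd).and (EnumIn.prim (hbit false)))
  have hall := EnumIn.ball
    (p := fun (v : ℕ × ℕ) j => (j ∈ S ∧ v.1.testBit j = true) ∨ (j ∉ S ∧ v.1.testBit j = false))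
    (h1.comp ((Primrec.fst.comp Primrec.fst).pair Primrec.snd))
    (Primrec.list_range.comp Primrec.snd)
  refine EnumIn.of_iff (EnumIn.ex ((hS'.comp Primrec.snd).and
    ((EnumIn.prim (hbit true)).and hall))) fun u => ?_
  refine exists_congr fun i => and_congr_right fun _ => and_congr_right fun _ => ?_
  simp only [List.mem_range, Dset, Set.mem_ofPred_eq]
  refine forall₂_congr fun j _ => ?_
  cases u.testBit j <;> simp

/-- The two halves of the cut together determine `S`: if `D_t ≤ S < D_v` lexicographically, where
`D_t` and `D_v` agree below `n` and `n` is the largest element of `D_v`, then `n ∉ S`. -/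
theorem enumIn_compl_of_cut {S Y : Set ℕ} (h : EnumIn Y fun u => u ∈ upperCut S)
    (h' : EnumIn Y fun u => u ∉ upperCut S) : EnumIn Y fun n => n ∉ S := by
  have pn : Primrec fun w : (ℕ × ℕ) × ℕ => w.1.1 := Primrec.fst.comp Primrec.fst
  have pt : Primrec fun w : (ℕ × ℕ) × ℕ => w.1.2 := Primrec.snd.comp Primrec.fst
  have pv : Primrec fun w : (ℕ × ℕ) × ℕ => w.2 := Primrec.snd
  have e1 : EnumIn Y fun w : ((ℕ × ℕ) × ℕ) × ℕ => w.1.1.2.testBit w.2 = w.1.2.testBit w.2 :=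
    EnumIn.prim (Primrec.eq.comp
      (primrec_testBit.comp (pt.comp Primrec.fst) Primrec.snd)
      (primrec_testBit.comp (pv.comp Primrec.fst) Primrec.snd))
  have e2 : EnumIn Y fun w : ((ℕ × ℕ) × ℕ) × ℕ => w.1.2.testBit w.2 = false ∨ w.2 ≤ w.1.1.1 :=
    EnumIn.prim ((Primrec.eq.comp
      (primrec_testBit.comp (pv.comp Primrec.fst) Primrec.snd) (Primrec.const false)).or
      (Primrec.nat_le.comp Primrec.snd (pn.comp Primrec.fst)))
  have b1 := EnumIn.ball (p := fun (w : (ℕ × ℕ) × ℕ) j => w.1.2.testBit j = w.2.testBit j) e1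
    (Primrec.list_range.comp pn)
  have b2 := EnumIn.ball (p := fun (w : (ℕ × ℕ) × ℕ) j => w.2.testBit j = false ∨ j ≤ w.1.1) e2
    (Primrec.list_range.comp pv)
  refine EnumIn.of_iff (EnumIn.ex (EnumIn.ex ((h'.comp pt).and ((h.comp pv).and (b1.and b2)))))
    fun n => ?_
  simp only [List.mem_range]
  constructor
  · intro hn
    classical
    obtain ⟨t, ht⟩ := exists_testBit_iff ((List.range n).filter fun j => decide (j ∈ S))
    obtain ⟨v, hv⟩ := exists_testBit_iff (n :: (List.range n).filter fun j => decide (j ∈ S))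
    simp only [List.mem_cons, List.mem_filter, List.mem_range, decide_eq_true_eq] at ht hv
    refine ⟨t, v, ?_, ?_, ?_, ?_⟩
    · rintro ⟨i, hi, hi', -⟩
      exact hi ((ht i).1 hi').2
    · refine ⟨n, hn, (hv n).2 (Or.inl rfl), fun j hj => ?_⟩
      simp only [Dset, Set.mem_ofPred_eq, hv]
      exact ⟨fun h => Or.inr ⟨hj, h⟩, fun h => (h.resolve_left hj.ne).2⟩
    · intro j hj
      rw [Bool.eq_iff_iff, ht, hv]
      exact ⟨Or.inr, fun h => h.resolve_left hj.ne⟩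
    · intro j _
      cases hb : v.testBit j
      · exact Or.inl rfl
      · rcases (hv j).1 hb with rfl | h
        exacts [Or.inr le_rfl, Or.inr h.1.le]
  · rintro ⟨t, v, ht, ⟨i, hi, hi', hij⟩, hb1, hb2⟩ hn
    have hi'' : v.testBit i = true := hi'
    have hle : i ≤ n := (hb2 i (lt_of_testBit hi')).resolve_left (by simp [hi''])
    have hlt : i < n := lt_of_le_of_ne hle fun h => hi (h ▸ hn)
    refine ht ⟨i, hi, (hb1 i hlt).trans hi'', fun j hj => (hij j hj).trans ?_⟩
    simp only [Dset, Set.mem_ofPred_eq, hb1 j (hj.trans hlt)]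

theorem exists_kalimullinPair : ∃ A B : Set ℕ, KalimullinPair A B ∧ Arithmetical A ∧
    Arithmetical B ∧ ¬ CE A ∧ ¬ CE B := by
  set S := Kset (Je ∅) with hS
  have hSd : EnumIn (Je (Je ∅)) fun u => u ∈ upperCut S :=
    enumIn_upperCut
      ((EnumIn.mem Primrec.nat_double).of_iff fun _ => two_mul_mem_Je.symm)
      ((EnumIn.mem Primrec.nat_double_succ).of_iff fun _ => two_mul_add_one_mem_Je.symm)
  -- A c.e. half would make both halves, and with them `Sᶜ`, enumeration reducible to `J_e(∅)`.
  have key : ¬ ((EnumIn (Je ∅) fun u => u ∈ upperCut S) ∧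
      EnumIn (Je ∅) fun u => u ∉ upperCut S) := fun h =>
    not_enumRed_compl_Kset (Je ∅) (enumRed_iff_enumIn.2 (enumIn_compl_of_cut h.1 h.2))
  refine ⟨(upperCut S)ᶜ, upperCut S, kalimullinPair_cut S, ⟨3, ?_⟩, ⟨2, ?_⟩, ?_, ?_⟩
  · exact enumRed_iff_enumIn.2 hSd.jump_not
  · exact enumRed_iff_enumIn.2 hSd
  · intro h
    have h' := ce_iff_enumIn.1 h
    exact key ⟨h'.jump_not.of_iff fun u => by simp, h'.jump⟩
  · intro h
    have h' := ce_iff_enumIn.1 h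
    exact key ⟨h'.jump, h'.jump_not⟩

/-- The arithmetical sets `X` with `Kᶜ ≰ₑ X` do not form a splitting class:
there are non-c.e. `B₁, B₂` in the class such that for every `C` in the class
at least one of `B₁ ⊕ C`, `B₂ ⊕ C` stays in the class; in particular the
splitting condition fails for `A = ∅`, `𝓑 = {B₁, B₂}`. -/
theorem arithmetical_not_splitting_class :
    ¬ SplittingClassE ArithBelowJump ∧
    ∃ B1 B2 : Set ℕ, B1 ∈ ArithBelowJump ∧ B2 ∈ ArithBelowJump ∧ ¬ CE B1 ∧ ¬ CE B2 ∧
      ∀ C ∈ ArithBelowJump,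
        oplus B1 C ∈ ArithBelowJump ∨ oplus B2 C ∈ ArithBelowJump := by
  obtain ⟨B1, B2, hK, a1, a2, c1, c2⟩ := exists_kalimullinPair
  have m1 : B1 ∈ ArithBelowJump := ⟨a1, hK.not_enumRed c2⟩
  have m2 : B2 ∈ ArithBelowJump := ⟨a2, hK.symm.not_enumRed c1⟩
  have main : ∀ C ∈ ArithBelowJump,
      oplus B1 C ∈ ArithBelowJump ∨ oplus B2 C ∈ ArithBelowJump := by
    intro C hC
    by_contra! H
    have h1 : EnumRed Khaltᶜ (oplus B1 C) := by_contra fun h => H.1 ⟨a1.oplus hC.1, h⟩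
    have h2 : EnumRed Khaltᶜ (oplus B2 C) := by_contra fun h => H.2 ⟨a2.oplus hC.1, h⟩
    exact hC.2 (hK.enumRed_of_oplus h1 h2)
  refine ⟨?_, B1, B2, m1, m2, c1, c2, main⟩
  rintro ⟨-, -, hsplit⟩
  have hce : CE (∅ : Set ℕ) := ce_iff_enumIn.2 (EnumIn.mem Primrec.id)
  have h0 : (∅ : Set ℕ) ∈ ArithBelowJump :=
    ⟨⟨0, hce.enumRed _⟩, fun h => not_ce_compl_Khalt (enumRed_empty_iff.1 h)⟩
  obtain ⟨C, hC, -, -, hB⟩ := hsplit ∅ h0 {B1, B2} (Set.toFinite _)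
    (by rintro B (rfl | rfl) <;> assumption)
    (by rintro B (rfl | rfl) <;> rw [enumRed_empty_iff] <;> assumption)
  rcases main C hC with h | h
  · exact hB B1 (by simp) h
  · exact hB B2 (by simp) h
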